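/- Let G be a connected graph on n vertices with m edges and let 1/2 ≤ α < 1. Then for every integer k with 2 ≤ k ≤ n, S_k(A_α(G)) ≤ α(2k + 2m − n). -/

import Mathlib

open Matrix Finset Real

/-- The `A_α`-matrix of a graph: `A_α(G) = α·D(G) + (1−α)·A(G)`. -/
noncomputable def Aalpha {n : ℕ} (α : ℝ) (G : SimpleGraph (Fin n)) [DecidableRel G.Adj] :
    Matrix (Fin n) (Fin n) ℝ :=
  α • Matrix.diagonal (fun i => (G.degree i : ℝ)) + (1 - α) • G.adjMatrix ℝ

/-- The sum of the `k` largest eigenvalues of a real symmetric matrix, expressed as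
the supremum over all `k`-subsets of indices of the corresponding eigenvalue sums. -/
noncomputable def Sk {n : ℕ} (M : Matrix (Fin n) (Fin n) ℝ) (k : ℕ) : ℝ :=
  if h : M.IsHermitian then
    sSup {x : ℝ | ∃ s : Finset (Fin n), s.card = k ∧ x = ∑ i ∈ s, h.eigenvalues i}
  else 0

/-!
Write `α D + (1 - α) A = (1 - α) (D + A) + (2 α - 1) D`, and let `w` range over `k` orthonormal
eigenvectors. For each vertex `v` the number `∑ w v ^ 2` lies in `[0, 1]`, and these numbers add up
to `k`, so the degree part contributes at most `2 m - n + k`. The signless Laplacian `D + A` has the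
quadratic form `∑ (x u + x v) ^ 2` over the edges `uv`, so by Bessel's inequality every edge
contributes at most `2`. This is improved on the edges of a spanning forest of stars (a minimal edge
cover): if `Q` is the signless Laplacian of a star with `r ≥ 1` edges, then `Q - 2` is at most
`r - 1` times a rank one projection, and the sum of `r - 1` over all stars is `2 |F| - n`, where `F`
is the set of forest edges. Altogether `D + A` contributes at most `2 k + 2 |F| - n + 2 (m - |F|)`.
-/

section StarCover

variable {V : Type*}

/-- The edges `l — f l`, for `l ∈ L`, form a spanning forest of `G` whose components are stars with
at least one edge: `L` is the set of leaves, `Lᶜ` is the set of centres and `f` sends a leaf to its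
centre. The values of `f` outside `L` are irrelevant. -/
structure IsStarCover (G : SimpleGraph V) (L : Finset V) (f : V → V) : Prop where
  adj : ∀ l ∈ L, G.Adj l (f l)
  center_notMem : ∀ l ∈ L, f l ∉ L
  exists_leaf : ∀ c ∉ L, ∃ l ∈ L, f l = c

lemma subsingleton_neighborSet_or_of_minimal {H : SimpleGraph V}
    (hH : Minimal (fun K : SimpleGraph V ↦ ∀ v, ¬ K.IsIsolated v) H) {u v : V} (huv : H.Adj u v) :
    (H.neighborSet u).Subsingleton ∨ (H.neighborSet v).Subsingleton := by
  by_contra! ⟨hu, hv⟩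
  obtain ⟨a, hua, hav⟩ := hu.exists_ne v
  obtain ⟨b, hvb, hbu⟩ := hv.exists_ne u
  have exists_other_edge (x : V) : ∃ y, H.Adj x y ∧ s(x, y) ≠ s(u, v) := by
    obtain ⟨y, hxy⟩ := SimpleGraph.exists_adj_iff_not_isIsolated.2 (hH.prop x)
    simp only [SimpleGraph.mem_neighborSet] at hua hvb
    by_cases hxu : x = u
    · exact ⟨a, by grind⟩
    by_cases hxv : x = v
    · exact ⟨b, by grind⟩
    · exact ⟨y, by grind⟩
  have no_isolated (x : V) : ¬ (H.deleteEdges {s(u, v)}).IsIsolated x := by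
    simpa [← SimpleGraph.exists_adj_iff_not_isIsolated] using exists_other_edge x
  have := hH.le_of_le no_isolated (H.deleteEdges_le _) huv
  simp at this

lemma exists_isStarCover [Finite V] {G : SimpleGraph V} (hG : ∀ v, ¬ G.IsIsolated v) :
    ∃ L f, IsStarCover G L f := by
  classical
  obtain ⟨H, hHG, hH⟩ := Finite.exists_le_minimal
    (p := fun K : SimpleGraph V ↦ ∀ v, ¬ K.IsIsolated v) hG
  obtain ⟨L, -, hL⟩ := Finite.exists_le_maximal
    (p := fun L : Finset V ↦ (∀ l ∈ L, (H.neighborSet l).Subsingleton) ∧ H.IsIndepSet L)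
    (a := ∅) (by simp)
  choose f hf using fun v ↦ SimpleGraph.exists_adj_iff_not_isIsolated.2 (hH.prop v)
  have exists_adj_mem (x : V) (hx : x ∉ L) (hleaf : (H.neighborSet x).Subsingleton) :
      ∃ l ∈ L, H.Adj x l := by
    by_contra! hxL
    refine hx (hL.le_of_ge ⟨?_, ?_⟩ (Finset.subset_insert x L) (Finset.mem_insert_self x L))
    · exact Finset.forall_mem_insert _ _ _ |>.2 ⟨hleaf, hL.prop.1⟩
    · rw [Finset.coe_insert, SimpleGraph.isIndepSet_iff, Set.pairwise_insert]
      exact ⟨hL.prop.2, fun l hl _ ↦ ⟨hxL l hl, fun hlx ↦ hxL l hl hlx.symm⟩⟩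
  refine ⟨L, f, fun l _ ↦ hHG (hf l), fun l hl hfl ↦ ?_, fun c hc ↦ ?_⟩
  · exact hL.prop.2 hl hfl (hf l).ne (hf l)
  · obtain ⟨l, hl, hcl⟩ : ∃ l ∈ L, H.Adj c l := by
      obtain hleaf | hleaf := subsingleton_neighborSet_or_of_minimal hH (hf c)
      · exact exists_adj_mem c hc hleaf
      · by_cases hfc : f c ∈ L
        · exact ⟨f c, hfc, hf c⟩
        · obtain ⟨l, hl, hfcl⟩ := exists_adj_mem (f c) hfc hleaf
          exact absurd (hleaf (hf c).symm hfcl ▸ hl) hc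
    exact ⟨l, hl, hL.prop.1 l hl (hf l) hcl.symm⟩

lemma IsStarCover.injOn_edge {G : SimpleGraph V} {L : Finset V} {f : V → V}
    (h : IsStarCover G L f) : Set.InjOn (fun l ↦ s(l, f l)) L := by
  intro l hl l' hl' heq
  obtain ⟨rfl, -⟩ | ⟨rfl, -⟩ := Sym2.eq_iff.1 heq
  · rfl
  · exact absurd hl (h.center_notMem l' hl')

end StarCover

section Orthonormal

variable {ι V : Type*} [Fintype V] {w : ι → EuclideanSpace ℝ V}

lemma sum_dotProduct_sq_le (hw : Orthonormal ℝ w) (s : Finset ι) (z : V → ℝ) :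
    ∑ i ∈ s, (w i ⬝ᵥ z) ^ 2 ≤ z ⬝ᵥ z := by
  have norm_sq : ‖WithLp.toLp 2 z‖ ^ 2 = z ⬝ᵥ z := by
    simp only [EuclideanSpace.real_norm_sq_eq, dotProduct, ← sq]
  simpa [norm_sq, EuclideanSpace.inner_eq_star_dotProduct, dotProduct_comm z] using
    hw.sum_inner_products_le (WithLp.toLp 2 z) (s := s)

lemma sum_apply_sq_le_one (hw : Orthonormal ℝ w) (s : Finset ι) (v : V) :
    ∑ i ∈ s, w i v ^ 2 ≤ 1 := by
  classical
  simpa using sum_dotProduct_sq_le hw s (Pi.single v 1)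

lemma sum_sum_apply_sq (hw : Orthonormal ℝ w) (s : Finset ι) :
    ∑ i ∈ s, ∑ v, w i v ^ 2 = #s := by
  simp [← EuclideanSpace.real_norm_sq_eq, hw.1]

/-- The signless Laplacian of a star with `r` edges has largest eigenvalue `r + 1`, with eigenvector
`r` at the centre and `1` at the leaves, and its other eigenvalues are at most `1`. The weighted
square on the right-hand side is `r - 1` times the projection onto that eigenvector. -/
lemma sum_add_sq_le_of_nonempty {κ K : Type*} [Field K] [LinearOrder K] [IsStrictOrderedRing K]
    {S : Finset κ} (hS : S.Nonempty) (a : K) (x : κ → K) :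
    ∑ l ∈ S, (x l + a) ^ 2 ≤ 2 * (a ^ 2 + ∑ l ∈ S, x l ^ 2) +
      (#S - 1) / (#S * (#S + 1)) * (#S * a + ∑ l ∈ S, x l) ^ 2 := by
  have hr : (0 : K) < #S := by exact_mod_cast hS.card_pos
  set r : K := (#S : K)
  set σ := ∑ l ∈ S, x l
  have expand : ∑ l ∈ S, (x l + a) ^ 2 = ∑ l ∈ S, x l ^ 2 + 2 * σ * a + r * a ^ 2 := by
    simp only [add_sq, Finset.sum_add_distrib, ← Finset.sum_mul, ← Finset.mul_sum,
      Finset.sum_const, nsmul_eq_mul, r, σ]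
  have cauchy : σ ^ 2 / r ≤ ∑ l ∈ S, x l ^ 2 := by
    rw [div_le_iff₀' hr]
    exact sq_sum_le_card_mul_sum_sq
  have gap : 2 * a ^ 2 + (r - 1) / (r * (r + 1)) * (r * a + σ) ^ 2 + σ ^ 2 / r
      - 2 * σ * a - r * a ^ 2 = 2 / (r + 1) * (a - σ) ^ 2 := by
    field_simp
    ring
  have : 0 ≤ 2 / (r + 1) * (a - σ) ^ 2 := by positivity
  linarith

lemma sum_sum_add_sq_le_of_notMem (hw : Orthonormal ℝ w) (s : Finset ι) {S : Finset V}
    (hS : S.Nonempty) {c : V} (hc : c ∉ S) :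
    ∑ i ∈ s, ∑ l ∈ S, (w i l + w i c) ^ 2 ≤
      2 * ∑ i ∈ s, (w i c ^ 2 + ∑ l ∈ S, w i l ^ 2) + (#S - 1) := by
  classical
  have hr : (1 : ℝ) ≤ #S := by exact_mod_cast hS.card_pos
  set r : ℝ := (#S : ℝ)
  set z : V → ℝ := Pi.single c r + ∑ l ∈ S, Pi.single l 1
  have dot_z (x : V → ℝ) : x ⬝ᵥ z = r * x c + ∑ l ∈ S, x l := by
    simp [z, dotProduct_add, dotProduct_sum, mul_comm]
  have z_dot_z : z ⬝ᵥ z = r * (r + 1) := by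
    have center : z c = r := by simp [z, Finset.sum_apply, Pi.single_apply, hc]
    have leaf : ∀ l ∈ S, z l = 1 := fun l hl ↦ by
      simp [z, Finset.sum_apply, Pi.single_apply, hl, ne_of_mem_of_not_mem hl hc]
    rw [dot_z, center, Finset.sum_congr rfl leaf, Finset.sum_const, nsmul_one]
    ring
  have bessel : ∑ i ∈ s, (r * w i c + ∑ l ∈ S, w i l) ^ 2 ≤ r * (r + 1) := by
    simpa only [← dot_z, ← z_dot_z] using sum_dotProduct_sq_le hw s z
  calc
    _ ≤ ∑ i ∈ s, (2 * (w i c ^ 2 + ∑ l ∈ S, w i l ^ 2) +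
          (r - 1) / (r * (r + 1)) * (r * w i c + ∑ l ∈ S, w i l) ^ 2) :=
      Finset.sum_le_sum fun i _ ↦ sum_add_sq_le_of_nonempty hS (w i c) (w i)
    _ = 2 * ∑ i ∈ s, (w i c ^ 2 + ∑ l ∈ S, w i l ^ 2) +
          (r - 1) / (r * (r + 1)) * ∑ i ∈ s, (r * w i c + ∑ l ∈ S, w i l) ^ 2 := by
      rw [Finset.sum_add_distrib, ← Finset.mul_sum, ← Finset.mul_sum]
    _ ≤ 2 * ∑ i ∈ s, (w i c ^ 2 + ∑ l ∈ S, w i l ^ 2) +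
          (r - 1) / (r * (r + 1)) * (r * (r + 1)) := by
      have : 0 ≤ (r - 1) / (r * (r + 1)) := div_nonneg (by linarith) (by positivity)
      gcongr
    _ = _ := by rw [div_mul_cancel₀ _ (by positivity)]

lemma IsStarCover.sum_sum_add_sq_le [DecidableEq V] {G : SimpleGraph V} {L : Finset V} {f : V → V}
    (h : IsStarCover G L f) (hw : Orthonormal ℝ w) (s : Finset ι) :
    ∑ i ∈ s, ∑ l ∈ L, (w i l + w i (f l)) ^ 2 ≤ 2 * #s + #L - #Lᶜ := by
  have hf : ∀ l ∈ L, f l ∈ Lᶜ := fun l hl ↦ Finset.mem_compl.2 (h.center_notMem l hl)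
  have sum_stars (g : V → ℝ) : ∑ c ∈ Lᶜ, ∑ l ∈ L with f l = c, g l = ∑ l ∈ L, g l :=
    Finset.sum_fiberwise_of_maps_to hf g
  have star_bound (c : V) (hc : c ∈ Lᶜ) :
      ∑ i ∈ s, ∑ l ∈ L with f l = c, (w i l + w i (f l)) ^ 2 ≤
        2 * ∑ i ∈ s, (w i c ^ 2 + ∑ l ∈ L with f l = c, w i l ^ 2) +
          (#{l ∈ L | f l = c} - 1) := by
    rw [Finset.mem_compl] at hc
    have hne : {l ∈ L | f l = c}.Nonempty := by
      simpa [Finset.Nonempty] using h.exists_leaf c hc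
    refine le_of_eq_of_le ?_ (sum_sum_add_sq_le_of_notMem hw s hne (c := c) (by simp [hc]))
    exact Finset.sum_congr rfl fun i _ ↦ Finset.sum_congr rfl fun l hl ↦ by
      rw [(Finset.mem_filter.1 hl).2]
  calc
    _ = ∑ c ∈ Lᶜ, ∑ i ∈ s, ∑ l ∈ L with f l = c, (w i l + w i (f l)) ^ 2 := by
      simp only [Finset.sum_comm (s := Lᶜ) (t := s), sum_stars]
    _ ≤ ∑ c ∈ Lᶜ, (2 * ∑ i ∈ s, (w i c ^ 2 + ∑ l ∈ L with f l = c, w i l ^ 2) +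
          (#{l ∈ L | f l = c} - 1)) := Finset.sum_le_sum star_bound
    _ = 2 * ∑ i ∈ s, ∑ v, w i v ^ 2 + #L - #Lᶜ := by
      have card_stars : ∑ c ∈ Lᶜ, (#{l ∈ L | f l = c} : ℝ) = #L := by
        exact_mod_cast (Finset.card_eq_sum_card_fiberwise hf).symm
      simp only [Finset.sum_add_distrib, Finset.sum_sub_distrib, ← Finset.mul_sum, card_stars,
        Finset.sum_comm (s := Lᶜ) (t := s), sum_stars, Finset.sum_const, nsmul_eq_mul, mul_one,
        ← Finset.sum_compl_add_sum L]
      ring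
    _ = 2 * #s + #L - #Lᶜ := by rw [sum_sum_apply_sq hw]

end Orthonormal

section Graph

variable {V : Type*} [Fintype V] [DecidableEq V] (G : SimpleGraph V) [DecidableRel G.Adj]

section Semiring

variable {R : Type*}

lemma vecMul_incMatrix_mk [NonAssocSemiring R] {u v : V} (huv : G.Adj u v) (x : V → R) :
    (x ᵥ* G.incMatrix R) s(u, v) = x u + x v := by
  have : ({a | a = u ∨ a = v} : Finset V) = {u, v} := by ext; simp
  simp [vecMul, dotProduct, SimpleGraph.incMatrix_apply', SimpleGraph.mk'_mem_incidenceSet_iff, huv,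
    ← Finset.sum_filter, this, Finset.sum_pair huv.ne]

lemma degMatrix_add_adjMatrix [Semiring R] :
    G.degMatrix R + G.adjMatrix R = G.incMatrix R * (G.incMatrix R)ᵀ := by
  ext u v
  rw [G.incMatrix_mul_transpose]
  by_cases huv : u = v <;> simp [SimpleGraph.degMatrix, huv]

lemma dotProduct_degMatrix_add_adjMatrix_mulVec [CommSemiring R] (x : V → R) :
    x ⬝ᵥ (G.degMatrix R + G.adjMatrix R) *ᵥ x =
      ∑ e ∈ G.edgeFinset, (x ᵥ* G.incMatrix R) e ^ 2 := by
  have support (e : Sym2 V) (he : e ∉ G.edgeFinset) : (x ᵥ* G.incMatrix R) e ^ 2 = 0 := by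
    have notMem (v : V) : e ∉ G.incidenceSet v := fun h ↦ he (G.mem_edgeFinset.2 h.1)
    simp [vecMul, dotProduct, SimpleGraph.incMatrix_of_notMem_incidenceSet, notMem]
  rw [degMatrix_add_adjMatrix, ← mulVec_mulVec, dotProduct_mulVec, mulVec_transpose, dotProduct,
    Finset.sum_subset (Finset.subset_univ G.edgeFinset) fun e _ ↦ support e]
  simp only [sq]

end Semiring

variable {ι : Type*} {w : ι → EuclideanSpace ℝ V}

lemma sum_vecMul_incMatrix_sq_le_two (hw : Orthonormal ℝ w) (s : Finset ι) (e : Sym2 V) :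
    ∑ i ∈ s, (w i ᵥ* G.incMatrix ℝ) e ^ 2 ≤ 2 := by
  refine (sum_dotProduct_sq_le hw s fun v ↦ G.incMatrix ℝ v e).trans ?_
  change ((G.incMatrix ℝ)ᵀ * G.incMatrix ℝ) e e ≤ 2
  rw [G.incMatrix_transpose_mul_diag]
  split_ifs <;> norm_num

variable {G}

lemma sum_dotProduct_degMatrix_add_adjMatrix_mulVec_le (hG : ∀ v, ¬ G.IsIsolated v)
    (hw : Orthonormal ℝ w) (s : Finset ι) :
    ∑ i ∈ s, w i ⬝ᵥ (G.degMatrix ℝ + G.adjMatrix ℝ) *ᵥ w i ≤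
      2 * #G.edgeFinset - Fintype.card V + 2 * #s := by
  obtain ⟨L, f, h⟩ := exists_isStarCover hG
  set F : Finset (Sym2 V) := L.image fun l ↦ s(l, f l)
  have hF : F ⊆ G.edgeFinset := by
    simpa [F, Finset.image_subset_iff] using h.adj
  have card_F : #F = #L := Finset.card_image_of_injOn h.injOn_edge
  have star_edges : ∑ e ∈ F, ∑ i ∈ s, (w i ᵥ* G.incMatrix ℝ) e ^ 2 ≤ 2 * #s + #L - #Lᶜ := by
    rw [Finset.sum_image h.injOn_edge, Finset.sum_comm]
    refine le_of_eq_of_le ?_ (h.sum_sum_add_sq_le hw s)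
    exact Finset.sum_congr rfl fun i _ ↦ Finset.sum_congr rfl fun l hl ↦ by
      rw [vecMul_incMatrix_mk G (h.adj l hl)]
  have other_edges : ∑ e ∈ G.edgeFinset \ F, ∑ i ∈ s, (w i ᵥ* G.incMatrix ℝ) e ^ 2 ≤
      2 * (#G.edgeFinset - #L) := by
    refine (Finset.sum_le_card_nsmul _ _ 2 fun e _ ↦
      sum_vecMul_incMatrix_sq_le_two G hw s e).trans_eq ?_
    rw [nsmul_eq_mul, Finset.cast_card_sdiff hF, card_F, mul_comm]
  have card_V : (#L : ℝ) + #Lᶜ = Fintype.card V := by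
    exact_mod_cast Finset.card_add_card_compl L
  simp only [dotProduct_degMatrix_add_adjMatrix_mulVec]
  rw [Finset.sum_comm, ← Finset.sum_sdiff hF]
  linarith

lemma sum_dotProduct_degMatrix_mulVec_le (hG : ∀ v, ¬ G.IsIsolated v)
    (hw : Orthonormal ℝ w) (s : Finset ι) :
    ∑ i ∈ s, w i ⬝ᵥ G.degMatrix ℝ *ᵥ w i ≤ 2 * #G.edgeFinset - Fintype.card V + #s := by
  have one_le_degree (v : V) : (1 : ℝ) ≤ G.degree v := by
    exact_mod_cast (G.degree_pos_iff_exists_adj v).2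
      (SimpleGraph.exists_adj_iff_not_isIsolated.2 (hG v))
  calc
    _ = ∑ v, G.degree v * ∑ i ∈ s, w i v ^ 2 := by
      simp only [SimpleGraph.dotProduct_mulVec_degMatrix, Finset.mul_sum, mul_assoc, ← sq]
      exact Finset.sum_comm
    _ ≤ ∑ v, ((G.degree v : ℝ) - 1 + ∑ i ∈ s, w i v ^ 2) :=
      Finset.sum_le_sum fun v _ ↦ by
        linarith [mul_nonneg (sub_nonneg.2 (one_le_degree v))
          (sub_nonneg.2 (sum_apply_sq_le_one hw s v))]
    _ = 2 * #G.edgeFinset - Fintype.card V + #s := by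
      rw [Finset.sum_add_distrib, Finset.sum_sub_distrib, Finset.sum_comm, sum_sum_apply_sq hw]
      have : ∑ v, (G.degree v : ℝ) = 2 * #G.edgeFinset := by
        exact_mod_cast G.sum_degrees_eq_twice_card_edges
      simp [this]

end Graph

lemma sum_eigenvalues_eq_sum_dotProduct_mulVec {V : Type*} [Fintype V] [DecidableEq V]
    {M : Matrix V V ℝ} (hM : M.IsHermitian) (s : Finset V) :
    ∑ i ∈ s, hM.eigenvalues i = ∑ i ∈ s, hM.eigenvectorBasis i ⬝ᵥ M *ᵥ hM.eigenvectorBasis i := by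
  simp [hM.eigenvalues_eq]

lemma isHermitian_smul_degMatrix_add_smul_adjMatrix {V : Type*} [Fintype V] [DecidableEq V]
    (G : SimpleGraph V) [DecidableRel G.Adj] (a b : ℝ) :
    (a • G.degMatrix ℝ + b • G.adjMatrix ℝ).IsHermitian :=
  ((G.isHermitian_degMatrix ℝ).smul (.all a)).add ((G.isHermitian_adjMatrix ℝ).smul (.all b))

lemma Sk_le {n k : ℕ} {M : Matrix (Fin n) (Fin n) ℝ} (hM : M.IsHermitian) (hkn : k ≤ n) {C : ℝ}
    (hC : ∀ s : Finset (Fin n), #s = k → ∑ i ∈ s, hM.eigenvalues i ≤ C) : Sk M k ≤ C := by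
  obtain ⟨t, -, ht⟩ := Finset.exists_subset_card_eq (s := (univ : Finset (Fin n))) (n := k)
    (by simpa using hkn)
  rw [Sk, dif_pos hM]
  refine csSup_le ⟨_, t, ht, rfl⟩ ?_
  rintro _ ⟨s, hs, rfl⟩
  exact hC s hs

theorem stmt9_general {V : Type*} [Fintype V] [DecidableEq V] (G : SimpleGraph V)
    [DecidableRel G.Adj] (hG : ∀ v, ¬ G.IsIsolated v) {α : ℝ} (hα0 : 1 / 2 ≤ α) (hα1 : α ≤ 1)
    (hM : (α • G.degMatrix ℝ + (1 - α) • G.adjMatrix ℝ).IsHermitian) (s : Finset V) :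
    ∑ i ∈ s, hM.eigenvalues i ≤ α * (2 * #G.edgeFinset - Fintype.card V) + #s := by
  have hw := hM.eigenvectorBasis.orthonormal
  have signless := mul_le_mul_of_nonneg_left
    (sum_dotProduct_degMatrix_add_adjMatrix_mulVec_le hG hw s) (sub_nonneg.2 hα1)
  have degree := mul_le_mul_of_nonneg_left
    (sum_dotProduct_degMatrix_mulVec_le hG hw s) (by linarith : 0 ≤ 2 * α - 1)
  have decomposition : α • G.degMatrix ℝ + (1 - α) • G.adjMatrix ℝ =
      (1 - α) • (G.degMatrix ℝ + G.adjMatrix ℝ) + (2 * α - 1) • G.degMatrix ℝ := by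
    module
  calc
    _ = (1 - α) * ∑ i ∈ s, hM.eigenvectorBasis i ⬝ᵥ
            (G.degMatrix ℝ + G.adjMatrix ℝ) *ᵥ hM.eigenvectorBasis i +
          (2 * α - 1) * ∑ i ∈ s, hM.eigenvectorBasis i ⬝ᵥ
            G.degMatrix ℝ *ᵥ hM.eigenvectorBasis i := by
      rw [sum_eigenvalues_eq_sum_dotProduct_mulVec, Finset.mul_sum, Finset.mul_sum,
        ← Finset.sum_add_distrib]
      refine Finset.sum_congr rfl fun i _ ↦ ?_
      nth_rw 2 [decomposition]
      simp only [add_mulVec, smul_mulVec, dotProduct_add, dotProduct_smul, smul_eq_mul]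
    _ ≤ α * (2 * #G.edgeFinset - Fintype.card V) + #s := by linarith

theorem stmt9 {n : ℕ} (G : SimpleGraph (Fin n)) [DecidableRel G.Adj] (hG : G.Connected)
    (m : ℕ) (hm : G.edgeFinset.card = m)
    (α : ℝ) (hα0 : 1 / 2 ≤ α) (hα1 : α < 1)
    (k : ℕ) (hk2 : 2 ≤ k) (hkn : k ≤ n) :
    Sk (Aalpha α G) k ≤ α * (2 * (k : ℝ) + 2 * m - n) := by
  have : Nontrivial (Fin n) := Fin.nontrivial_iff_two_le.2 (hk2.trans hkn)
  have hM := isHermitian_smul_degMatrix_add_smul_adjMatrix G α (1 - α)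
  refine Sk_le hM hkn fun s hs ↦
    (stmt9_general G hG.preconnected.not_isIsolated hα0 hα1.le hM s).trans ?_
  rw [hm, hs, Fintype.card_fin]
  nlinarith [k.cast_nonneg (α := ℝ)]
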